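/- Let N ≥ 3 and 2 ≤ p < 2 + 4/α. There exists a constant C > 0, depending only on N, p, α, a₁, a₂, such that for every smooth compactly supported function φ : Ω_Ψ → ℂ one has ( ∫_{Ω_Ψ} |φ(y)|^{pN/(N−2)} m̃(y) dy )^{(N−2)/(pN)} ≤ C ( Re ∫_{Ω_Ψ} ( −div( b(y) ∇φ(y) ) − ((N−2)²α(4+α)/16) |y|^{−2} φ(y) ) conj(φ(y)) |φ(y)|^{p−2} dy )^{1/p}. -/

import Mathlib

open MeasureTheory

section PowerMap

variable {V : Type*} [NormedAddCommGroup V] [InnerProductSpace ℝ V]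

/-- The derivative of `z ↦ ‖z‖ ^ q • z`. -/
noncomputable def normRpowSMulDeriv (q : ℝ) (z : V) : V →L[ℝ] V :=
  ‖z‖ ^ q • ContinuousLinearMap.id ℝ V + (q * ‖z‖ ^ (q - 2)) • (innerSL ℝ z).smulRight z

lemma normRpowSMulDeriv_apply (q : ℝ) (z w : V) :
    normRpowSMulDeriv q z w = ‖z‖ ^ q • w + (q * ‖z‖ ^ (q - 2) * inner ℝ z w) • z := by
  simp [normRpowSMulDeriv, smul_smul]

lemma hasFDerivAt_norm_rpow_smul {q : ℝ} (hq : 0 ≤ q) (z : V) :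
    HasFDerivAt (fun x : V ↦ ‖x‖ ^ q • x) (normRpowSMulDeriv q z) z := by
  rcases hq.eq_or_lt with rfl | hq
  · simpa [normRpowSMulDeriv] using! hasFDerivAt_id (𝕜 := ℝ) z
  by_cases hz : z = 0
  · subst hz
    have h0 : normRpowSMulDeriv q (0 : V) = 0 := by
      ext w; simp [normRpowSMulDeriv_apply, hq.ne']
    rw [h0]
    refine .of_isLittleO ?_
    have h1 : (fun x : V ↦ ‖x‖ ^ q) =o[nhds 0] (fun _ ↦ (1 : ℝ)) := by
      refine (Asymptotics.isLittleO_const_iff one_ne_zero).mpr ?_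
      have := (continuous_norm (E := V)).continuousAt (x := 0) |>.rpow_const (p := q) (.inr hq.le)
      simpa [ContinuousAt, hq.ne'] using this
    simpa using h1.smul_isBigO (Asymptotics.isBigO_refl (fun x : V ↦ x) (nhds 0))
  · have h1 : HasFDerivAt (fun x : V ↦ ‖x‖ ^ q) ((q * ‖z‖ ^ (q - 2)) • innerSL ℝ z) z := by
      apply HasStrictFDerivAt.hasFDerivAt
      convert! (hasStrictFDerivAt_norm_sq z).rpow_const (p := q / 2) (by simp [hz]) using 0
      simp_rw [← Real.rpow_natCast_mul (norm_nonneg _), ← Nat.cast_smul_eq_nsmul ℝ, smul_smul]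
      ring_nf
    refine (h1.smul (hasFDerivAt_id z)).congr_fderiv ?_
    ext w
    simp [normRpowSMulDeriv_apply]

lemma norm_normRpowSMulDeriv_le {q : ℝ} (hq : 0 ≤ q) (z : V) :
    ‖normRpowSMulDeriv q z‖ ≤ (1 + q) * ‖z‖ ^ q := by
  refine ContinuousLinearMap.opNorm_le_bound _ (by positivity) fun w ↦ ?_
  rw [normRpowSMulDeriv_apply]
  by_cases hz : z = 0
  · simp [hz, norm_smul]
    rw [abs_of_nonneg (Real.rpow_nonneg le_rfl q)]
    nlinarith [mul_nonneg hq (mul_nonneg (Real.rpow_nonneg (le_refl (0:ℝ)) q) (norm_nonneg w))]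
  have hz' : 0 < ‖z‖ := norm_pos_iff.mpr hz
  have e : ‖z‖ ^ q = ‖z‖ ^ (q - 2) * ‖z‖ ^ 2 := by
    rw [← Real.rpow_natCast, ← Real.rpow_add hz']; simp
  refine (norm_add_le _ _).trans ?_
  rw [norm_smul, norm_smul, norm_mul, Real.norm_of_nonneg (by positivity),
    Real.norm_of_nonneg (by positivity)]
  have := norm_inner_le_norm (𝕜 := ℝ) z w
  calc ‖z‖ ^ q * ‖w‖ + q * ‖z‖ ^ (q - 2) * ‖inner ℝ z w‖ * ‖z‖
      ≤ ‖z‖ ^ q * ‖w‖ + q * ‖z‖ ^ (q - 2) * (‖z‖ * ‖w‖) * ‖z‖ := by gcongr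
    _ = (1 + q) * ‖z‖ ^ q * ‖w‖ := by rw [e]; ring

lemma continuous_normRpowSMulDeriv {q : ℝ} (hq : 0 ≤ q) :
    Continuous (normRpowSMulDeriv q : V → V →L[ℝ] V) := by
  rcases hq.eq_or_lt with rfl | hq
  · have : (normRpowSMulDeriv 0 : V → V →L[ℝ] V) = fun _ ↦ ContinuousLinearMap.id ℝ V := by
      ext z w; simp [normRpowSMulDeriv]
    rw [this]; exact continuous_const
  refine continuous_iff_continuousAt.mpr fun z ↦ ?_
  by_cases hz : z = 0
  · subst hz
    have h0 : normRpowSMulDeriv q (0 : V) = 0 := by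
      ext w; simp [normRpowSMulDeriv_apply, hq.ne']
    rw [ContinuousAt, h0]
    refine squeeze_zero_norm (norm_normRpowSMulDeriv_le hq.le) ?_
    have := (continuous_norm (E := V)).continuousAt (x := 0) |>.rpow_const (p := q) (.inr hq.le)
    have := this.const_mul (1 + q)
    simpa [ContinuousAt, hq.ne'] using this
  · have hz' : ‖z‖ ≠ 0 := norm_ne_zero_iff.mpr hz
    unfold normRpowSMulDeriv
    have h1 : ∀ r : ℝ, ContinuousAt (fun x : V ↦ ‖x‖ ^ r) z := fun r ↦
      continuous_norm.continuousAt.rpow_const (.inl hz')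
    have h2 : Continuous fun x : V ↦ (innerSL ℝ x).smulRight x := by fun_prop
    exact ((h1 q).smul continuousAt_const).add
      ((continuousAt_const.mul (h1 _)).smul h2.continuousAt)

lemma contDiff_norm_rpow_smul {q : ℝ} (hq : 0 ≤ q) :
    ContDiff ℝ 1 (fun x : V ↦ ‖x‖ ^ q • x) := by
  refine contDiff_one_iff_fderiv.mpr
    ⟨fun z ↦ (hasFDerivAt_norm_rpow_smul hq z).differentiableAt, ?_⟩
  rw [show fderiv ℝ (fun x : V ↦ ‖x‖ ^ q • x) = normRpowSMulDeriv q from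
    funext fun z ↦ (hasFDerivAt_norm_rpow_smul hq z).fderiv]
  exact continuous_normRpowSMulDeriv hq

/-- The quadratic form of `z ↦ ‖z‖ ^ (p - 2) • z` controls that of `z ↦ ‖z‖ ^ (p / 2 - 1) • z`. -/
lemma norm_sq_normRpowSMulDeriv_le {p : ℝ} (hp : 2 ≤ p) (z w : V) :
    4 * (p - 1) / p ^ 2 * ‖normRpowSMulDeriv (p / 2 - 1) z w‖ ^ 2
      ≤ inner ℝ (normRpowSMulDeriv (p - 2) z w) w := by
  have hp0 : 0 < p := by linarith
  have hγ : 4 * (p - 1) / p ^ 2 ≤ 1 := by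
    rw [div_le_one (by positivity)]; nlinarith [sq_nonneg (p - 2)]
  by_cases hz : z = 0
  · subst hz
    simp only [normRpowSMulDeriv_apply, norm_zero, inner_zero_left, mul_zero, zero_smul, add_zero,
      norm_smul, inner_smul_left, real_inner_self_eq_norm_sq, mul_pow]
    rcases hp.eq_or_lt with rfl | hp
    · norm_num
    · rw [Real.zero_rpow (by linarith), Real.zero_rpow (by linarith)]; simp
  have hz' : 0 < ‖z‖ := norm_pos_iff.mpr hz
  set A := ‖z‖ ^ (p - 4) with hA
  have hA0 : 0 ≤ A := by positivity
  have e1 : ‖z‖ ^ (p - 2) = A * ‖z‖ ^ 2 := by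
    rw [hA, ← Real.rpow_natCast, ← Real.rpow_add hz']; norm_num; ring_nf
  have e2 : ‖z‖ ^ (p - 2 - 2) = A := by rw [hA]; ring_nf
  set B := ‖z‖ ^ (p / 2 - 1 - 2) with hB
  have e3 : ‖z‖ ^ (p / 2 - 1) = B * ‖z‖ ^ 2 := by
    rw [hB, ← Real.rpow_natCast, ← Real.rpow_add hz']; norm_num
  have e4 : B ^ 2 * ‖z‖ ^ 2 = A := by
    rw [hB, hA, ← Real.rpow_natCast, ← Real.rpow_natCast, ← Real.rpow_mul hz'.le,
      ← Real.rpow_add hz']; norm_num; ring_nf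
  rw [normRpowSMulDeriv_apply, normRpowSMulDeriv_apply, e1, e2, ← hB, e3]
  set t := inner ℝ z w with ht
  have hcs : t ^ 2 ≤ ‖z‖ ^ 2 * ‖w‖ ^ 2 := by
    rw [← mul_pow]; exact sq_le_sq' (by linarith [(abs_le.mp (abs_real_inner_le_norm z w)).1])
      (real_inner_le_norm z w)
  rw [norm_add_sq_real, inner_add_left]
  simp only [norm_smul, inner_smul_left, inner_smul_right, real_inner_self_eq_norm_sq, mul_pow,
    Real.norm_eq_abs, sq_abs, real_inner_comm w z]
  rw [real_inner_comm z w, ← ht]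
  simp only [conj_trivial]
  have hγ' : 4 * (p - 1) / p ^ 2 * (p ^ 2 / 4) = p - 1 := by field_simp
  set γ := 4 * (p - 1) / p ^ 2
  have key : 0 ≤ A * (1 - γ) * (‖z‖ ^ 2 * ‖w‖ ^ 2 - t ^ 2) :=
    mul_nonneg (mul_nonneg hA0 (by linarith)) (by linarith)
  have hL : γ * (B ^ 2 * (‖z‖ ^ 2) ^ 2 * ‖w‖ ^ 2
      + 2 * ((p / 2 - 1) * B * t * (B * ‖z‖ ^ 2 * t))
      + (p / 2 - 1) ^ 2 * B ^ 2 * t ^ 2 * ‖z‖ ^ 2)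
      = γ * A * (‖z‖ ^ 2 * ‖w‖ ^ 2 - t ^ 2) + A * (γ * (p ^ 2 / 4)) * t ^ 2 := by
    rw [← e4]; ring
  rw [hL, hγ']
  linarith
end PowerMap

section Integration

variable {N : ℕ} {V : Type*} [NormedAddCommGroup V] [InnerProductSpace ℝ V]

local notation "𝔼" => EuclideanSpace ℝ (Fin N)

lemma contDiff_inv_norm_sq_smul {n : WithTop ℕ∞} {f : 𝔼 → V} (hf : ContDiff ℝ n f)
    (h0 : 0 ∉ tsupport f) : ContDiff ℝ n fun y ↦ (‖y‖ ^ 2)⁻¹ • f y := by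
  refine contDiff_iff_contDiffAt.mpr fun x ↦ ?_
  rcases eq_or_ne x 0 with rfl | hx0
  · refine (contDiffAt_const (c := (0 : V))).congr_of_eventuallyEq ?_
    filter_upwards [notMem_tsupport_iff_eventuallyEq.mp h0] with y hy
    simp [hy]
  exact ((contDiff_norm_sq ℝ).contDiffAt.inv (by simpa using hx0)).smul hf.contDiffAt

lemma sum_coord_smul_fderiv (f : 𝔼 → V) (y z : 𝔼) :
    ∑ i, z i • fderiv ℝ f y (EuclideanSpace.single i 1) = fderiv ℝ f y z := by
  conv_rhs => rw [← (EuclideanSpace.basisFun (Fin N) ℝ).sum_repr z]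
  simp [map_sum]

lemma fderiv_coord_smul {h : 𝔼 → V} (hh : Differentiable ℝ h) (y v : 𝔼) (i : Fin N) :
    fderiv ℝ (fun z ↦ z i • h z) y v = v i • h y + y i • fderiv ℝ h y v := by
  have h1 : HasFDerivAt (fun z : 𝔼 ↦ z i) (EuclideanSpace.proj i : 𝔼 →L[ℝ] ℝ) y :=
    (EuclideanSpace.proj i : 𝔼 →L[ℝ] ℝ).hasFDerivAt
  rw [show fderiv ℝ (fun z ↦ z i • h z) y = _ from (h1.smul (hh y).hasFDerivAt).fderiv]
  simp [add_comm]

/-- The divergence of the radial field `y ↦ h y • y`. -/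
lemma sum_fderiv_coord_smul {h : 𝔼 → V} (hh : Differentiable ℝ h) (y : 𝔼) :
    ∑ i, fderiv ℝ (fun z ↦ z i • h z) y (EuclideanSpace.single i 1)
      = (N : ℝ) • h y + fderiv ℝ h y y := by
  simp only [fderiv_coord_smul hh, Finset.sum_add_distrib, sum_coord_smul_fderiv]
  simp [Nat.cast_smul_eq_nsmul]

lemma integral_inner_fderiv_eq_neg {f g : 𝔼 → V} (hf : ContDiff ℝ 1 f) (hg : ContDiff ℝ 1 g)
    (hgc : HasCompactSupport g) (v : 𝔼) :
    ∫ y, inner ℝ (f y) (fderiv ℝ g y v) = - ∫ y, inner ℝ (fderiv ℝ f y v) (g y) := by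
  have cf := hf.continuous_fderiv one_ne_zero
  have cg := hg.continuous_fderiv one_ne_zero
  have cf0 := hf.continuous
  have cg0 := hg.continuous
  refine integral_bilinear_fderiv_right_eq_neg_left_of_integrable (B := innerSL ℝ) ?_ ?_ ?_
    (fun x _ ↦ hf.differentiable one_ne_zero x) (fun x _ ↦ hg.differentiable one_ne_zero x)
  · exact Continuous.integrable_of_hasCompactSupport (by
      change Continuous fun _ ↦ inner ℝ _ _; fun_prop)
      (hgc.mono fun x hx h ↦ hx (by simp [h]))
  · exact Continuous.integrable_of_hasCompactSupport (by
      change Continuous fun _ ↦ inner ℝ _ _; fun_prop)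
      ((hgc.fderiv_apply (𝕜 := ℝ) v).mono fun x hx h ↦ hx (by simp [h]))
  · exact Continuous.integrable_of_hasCompactSupport (by
      change Continuous fun _ ↦ inner ℝ _ _; fun_prop)
      (hgc.mono fun x hx h ↦ hx (by simp [h]))

/-- Integration by parts against a divergence. -/
lemma integral_inner_sum_fderiv_eq_neg {f : 𝔼 → V} {g : Fin N → 𝔼 → V} (hf : ContDiff ℝ 1 f)
    (hg : ∀ i, ContDiff ℝ 1 (g i)) (hgc : ∀ i, HasCompactSupport (g i)) :
    ∫ y, inner ℝ (f y) (∑ i, fderiv ℝ (g i) y (EuclideanSpace.single i 1))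
      = - ∫ y, ∑ i, inner ℝ (fderiv ℝ f y (EuclideanSpace.single i 1)) (g i y) := by
  have cf := hf.continuous_fderiv one_ne_zero
  have cg := fun i ↦ (hg i).continuous_fderiv one_ne_zero
  have cf0 := hf.continuous
  have cg0 := fun i ↦ (hg i).continuous
  simp only [inner_sum]
  rw [integral_finsetSum, integral_finsetSum, ← Finset.sum_neg_distrib]
  · exact Finset.sum_congr rfl fun i _ ↦ integral_inner_fderiv_eq_neg hf (hg i) (hgc i) _
  · exact fun i _ ↦ Continuous.integrable_of_hasCompactSupport (by fun_prop)
      ((hgc i).mono fun x hx h ↦ hx (by simp [h]))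
  · exact fun i _ ↦ Continuous.integrable_of_hasCompactSupport (by fun_prop)
      (((hgc i).fderiv_apply (𝕜 := ℝ)
        (EuclideanSpace.single i 1)).mono fun x hx h ↦ hx (by simp [h]))

lemma integral_inner_radial_eq_neg {f h : 𝔼 → V} (hf : ContDiff ℝ 1 f)
    (hh : ContDiff ℝ 1 h) (hhc : HasCompactSupport h) :
    ∫ y, inner ℝ (f y) ((N : ℝ) • h y + fderiv ℝ h y y)
      = - ∫ y, inner ℝ (fderiv ℝ f y y) (h y) := by
  have e := integral_inner_sum_fderiv_eq_neg (f := f) (g := fun i z ↦ z i • h z) hf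
    (fun i ↦ by fun_prop) fun i ↦ hhc.smul_left
  simp only [sum_fderiv_coord_smul (hh.differentiable one_ne_zero)] at e
  rw [e]
  congr 2 with y
  rw [← sum_coord_smul_fderiv f y y, sum_inner]
  simp [inner_smul_left, inner_smul_right]

lemma fderiv_inv_norm_sq_smul_self {u : 𝔼 → V} (hu : Differentiable ℝ u) {y : 𝔼} (hy : y ≠ 0) :
    fderiv ℝ (fun z ↦ (‖z‖ ^ 2)⁻¹ • u z) y y
      = (‖y‖ ^ 2)⁻¹ • fderiv ℝ u y y - (2 : ℝ) • (‖y‖ ^ 2)⁻¹ • u y := by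
  have hy' : ‖y‖ ≠ 0 := norm_ne_zero_iff.mpr hy
  have h1 : HasFDerivAt (fun z : 𝔼 ↦ (‖z‖ ^ 2)⁻¹) _ y :=
    ((hasDerivAt_inv (pow_ne_zero 2 hy')).comp_hasFDerivAt y
      (hasStrictFDerivAt_norm_sq y).hasFDerivAt)
  rw [show fderiv ℝ (fun z ↦ (‖z‖ ^ 2)⁻¹ • u z) y = _ from
    (h1.smul (hu y).hasFDerivAt).fderiv]
  simp [smul_smul, sub_eq_add_neg, ← neg_smul]
  congr 1
  field_simp

lemma tsupport_fderiv_apply_self_subset (u : 𝔼 → V) :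
    tsupport (fun y ↦ fderiv ℝ u y y) ⊆ tsupport u := by
  refine closure_minimal (fun x hx ↦ ?_) (isClosed_tsupport u)
  by_contra h
  exact hx (by simp [fderiv_of_notMem_tsupport ℝ h])

lemma integrable_inv_norm_sq_mul_inner {f g : 𝔼 → V} (hf : Continuous f) (hg : Continuous g)
    (hfc : HasCompactSupport f) (h0 : 0 ∉ tsupport f) :
    Integrable fun y ↦ (‖y‖ ^ 2)⁻¹ * inner ℝ (f y) (g y) := by
  have h := (contDiff_inv_norm_sq_smul (n := 0) (contDiff_zero.mpr hf) h0).continuous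
  have e : (fun y ↦ (‖y‖ ^ 2)⁻¹ * inner ℝ (f y) (g y))
      = fun y ↦ inner ℝ ((‖y‖ ^ 2)⁻¹ • f y) (g y) := by
    ext y; simp [inner_smul_left]
  rw [e]
  exact Continuous.integrable_of_hasCompactSupport (by fun_prop)
    (hfc.mono fun x hx h ↦ hx (by simp [h]))

/-- Radial form of the **Hardy inequality**. -/
lemma hardy_radial {u : 𝔼 → V} (hu : ContDiff ℝ 1 u) (huc : HasCompactSupport u)
    (h0 : 0 ∉ tsupport u) :
    0 ≤ ∫ y, ((‖y‖ ^ 2)⁻¹ * ‖fderiv ℝ u y y‖ ^ 2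
      - (((N : ℝ) - 2) / 2) ^ 2 * ((‖y‖ ^ 2)⁻¹ * ‖u y‖ ^ 2)) := by
  set s := ((N : ℝ) - 2) / 2 with hs
  set w : 𝔼 → V := fun y ↦ (‖y‖ ^ 2)⁻¹ • u y with hw
  set R : 𝔼 → V := fun y ↦ fderiv ℝ u y y with hR
  have hu0 : u 0 = 0 := image_eq_zero_of_notMem_tsupport h0
  have hwd : ContDiff ℝ 1 w := contDiff_inv_norm_sq_smul hu h0
  have hwc : HasCompactSupport w := huc.smul_left
  have cu := hu.continuous
  have cR : Continuous R := (hu.continuous_fderiv one_ne_zero).clm_apply continuous_id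
  have hRt : tsupport R ⊆ tsupport u := tsupport_fderiv_apply_self_subset u
  have hRc : HasCompactSupport R := huc.of_isClosed_subset (isClosed_tsupport R) hRt
  have hR0 : 0 ∉ tsupport R := fun h ↦ h0 (hRt h)
  have i1 : Integrable fun y ↦ inner ℝ (u y) (w y) := by
    simpa only [hw, inner_smul_right] using integrable_inv_norm_sq_mul_inner cu cu huc h0
  have i2 : Integrable fun y ↦ inner ℝ (R y) (w y) := by
    simpa only [hw, inner_smul_right] using integrable_inv_norm_sq_mul_inner cR cu hRc hR0
  have i3 : Integrable fun y ↦ inner ℝ (R y) ((‖y‖ ^ 2)⁻¹ • R y) := by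
    simpa only [hw, inner_smul_right] using integrable_inv_norm_sq_mul_inner cR cR hRc hR0
  have e := integral_inner_radial_eq_neg hu hwd hwc
  have e' : ∀ y, inner ℝ (u y) ((N : ℝ) • w y + fderiv ℝ w y y)
      = 2 * s * inner ℝ (u y) (w y) + inner ℝ (R y) (w y) := fun y ↦ by
    by_cases hy : y = 0
    · subst hy; simp [hu0, hw]
    · rw [hw, fderiv_inv_norm_sq_smul_self (hu.differentiable one_ne_zero) hy]
      simp only [inner_add_right, inner_sub_right, inner_smul_right, hR, hs,
        real_inner_comm (u y) (fderiv ℝ u y y)]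
      ring
  simp only [e'] at e
  rw [integral_add (i1.const_mul _) i2, integral_const_mul] at e
  have pos : 0 ≤ ∫ y, (inner ℝ (R y) ((‖y‖ ^ 2)⁻¹ • R y) + 2 * s * inner ℝ (R y) (w y)
      + s ^ 2 * inner ℝ (u y) (w y)) := by
    refine integral_nonneg fun y ↦ ?_
    have : inner ℝ (R y) ((‖y‖ ^ 2)⁻¹ • R y) + 2 * s * inner ℝ (R y) (w y)
        + s ^ 2 * inner ℝ (u y) (w y) = (‖y‖ ^ 2)⁻¹ * ‖R y + s • u y‖ ^ 2 := by
      rw [norm_add_sq_real, hw]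
      simp only [inner_smul_right, real_inner_self_eq_norm_sq, norm_smul, mul_pow,
        Real.norm_eq_abs, sq_abs]
      ring
    simp only [Pi.zero_apply, this]
    positivity
  have i4 := i3.add (i2.const_mul (2 * s))
  simp only [Pi.add_def] at i4
  rw [integral_add i4 (i1.const_mul _), integral_add i3 (i2.const_mul _),
    integral_const_mul, integral_const_mul] at pos
  have g : ∀ y, (‖y‖ ^ 2)⁻¹ * ‖fderiv ℝ u y y‖ ^ 2 - s ^ 2 * ((‖y‖ ^ 2)⁻¹ * ‖u y‖ ^ 2)
      = inner ℝ (R y) ((‖y‖ ^ 2)⁻¹ • R y) - s ^ 2 * inner ℝ (u y) (w y) := fun y ↦ by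
    simp [inner_smul_right, hw, hR]
  simp only [g]
  rw [integral_sub i3 (i1.const_mul _), integral_const_mul]
  have : ∫ y, inner ℝ (R y) (w y) = - (s * ∫ y, inner ℝ (u y) (w y)) := by linarith
  rw [this] at pos
  linarith

lemma norm_fderiv_apply_sq_le (u : 𝔼 → V) (y v : 𝔼) :
    ‖fderiv ℝ u y v‖ ^ 2
      ≤ ‖v‖ ^ 2 * ∑ i, ‖fderiv ℝ u y (EuclideanSpace.single i 1)‖ ^ 2 := by
  rw [← sum_coord_smul_fderiv u y v, EuclideanSpace.norm_sq_eq]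
  refine le_trans ?_ (Finset.sum_mul_sq_le_sq_mul_sq _ _ _)
  gcongr
  exact (norm_sum_le _ _).trans_eq (Finset.sum_congr rfl fun i _ ↦ norm_smul _ _)

/-- **Sobolev inequality** in `L²` form. -/
lemma exists_sobolev_const [CompleteSpace V] (hN : 3 ≤ N) :
    ∃ S > (0 : ℝ), ∀ u : 𝔼 → V, ContDiff ℝ 1 u → HasCompactSupport u →
      ∫ y, ‖u y‖ ^ (2 * N / ((N : ℝ) - 2))
        ≤ S * (∫ y, ∑ i, ‖fderiv ℝ u y (EuclideanSpace.single i 1)‖ ^ 2)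
          ^ ((N : ℝ) / ((N : ℝ) - 2)) := by
  have hN' : (3 : ℝ) ≤ N := by exact_mod_cast hN
  have hN2 : 0 < (N : ℝ) - 2 := by linarith
  set q : ℝ := 2 * N / ((N : ℝ) - 2) with hq
  have hq0 : 0 < q := by positivity
  set C := eLpNormLESNormFDerivOfEqInnerConst (volume : Measure 𝔼) ((2 : NNReal) : ℝ)
  obtain ⟨q', hq'⟩ : ∃ q' : NNReal, (q' : ℝ) = q := ⟨⟨q, hq0.le⟩, rfl⟩
  refine ⟨(C : ℝ) ^ q + 1, by positivity, fun u hu huc ↦ ?_⟩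
  have cu := hu.continuous
  have cf := hu.continuous_fderiv one_ne_zero
  have h := eLpNorm_le_eLpNorm_fderiv_of_eq_inner (volume : Measure 𝔼) hu huc (p := 2)
    (p' := q') (by norm_num) (by simp; omega)
    (by rw [hq', finrank_euclideanSpace_fin, hq, NNReal.coe_inv, NNReal.coe_ofNat]; field_simp)
  have mu : MemLp u q' := cu.memLp_of_hasCompactSupport huc
  have mf : MemLp (fderiv ℝ u) (2 : NNReal) :=
    cf.memLp_of_hasCompactSupport (huc.fderiv (𝕜 := ℝ))
  rw [mu.eLpNorm_eq_integral_rpow_norm (by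
      rw [ne_eq, ENNReal.coe_eq_zero, ← NNReal.coe_eq_zero, hq']; exact hq0.ne') (by simp),
    mf.eLpNorm_eq_integral_rpow_norm (by simp) (by simp),
    show (eLpNormLESNormFDerivOfEqInnerConst _ _ : ENNReal) = ENNReal.ofReal C from
      (ENNReal.ofReal_coe_nnreal (p := C)).symm,
    ← ENNReal.ofReal_mul (by positivity), ENNReal.ofReal_le_ofReal_iff (by positivity)] at h
  simp only [ENNReal.coe_toReal, hq', NNReal.coe_ofNat, Real.rpow_ofNat] at h
  set I := ∫ y, ‖u y‖ ^ q
  have hI : 0 ≤ I := integral_nonneg fun y ↦ by positivity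
  set D := ∫ y, ‖fderiv ℝ u y‖ ^ 2
  have hD : 0 ≤ D := integral_nonneg fun y ↦ by positivity
  set T := ∫ y, ∑ i, ‖fderiv ℝ u y (EuclideanSpace.single i 1)‖ ^ 2
  have hDT : D ≤ T := by
    refine integral_mono_of_nonneg (.of_forall fun y ↦ by positivity) ?_ (.of_forall fun y ↦ ?_)
    · refine Continuous.integrable_of_hasCompactSupport (by fun_prop) ?_
      exact (huc.fderiv (𝕜 := ℝ)).mono fun x hx h ↦ hx (by simp [h])
    · have := ContinuousLinearMap.opNorm_le_bound (fderiv ℝ u y)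
        (Real.sqrt_nonneg (∑ i, ‖fderiv ℝ u y (EuclideanSpace.single i 1)‖ ^ 2)) fun v ↦ by
          refine le_of_sq_le_sq ?_ (by positivity)
          rw [mul_pow, Real.sq_sqrt (by positivity), mul_comm]
          exact norm_fderiv_apply_sq_le u y v
      calc _ ≤ _ := pow_le_pow_left₀ (norm_nonneg _) this 2
        _ = _ := Real.sq_sqrt (by positivity)
  have h2 := Real.rpow_le_rpow (by positivity) h hq0.le
  rw [← Real.rpow_mul hI, inv_mul_cancel₀ hq0.ne', Real.rpow_one,
    Real.mul_rpow (by positivity) (by positivity), ← Real.rpow_mul hD,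
    show (2 : ℝ)⁻¹ * q = N / ((N : ℝ) - 2) by rw [hq]; field_simp] at h2
  calc I ≤ (C : ℝ) ^ q * D ^ ((N : ℝ) / ((N : ℝ) - 2)) := h2
    _ ≤ ((C : ℝ) ^ q + 1) * T ^ ((N : ℝ) / ((N : ℝ) - 2)) := by
      gcongr
      linarith

end Integration

section Energy

variable {N : ℕ} {V : Type*} [NormedAddCommGroup V] [InnerProductSpace ℝ V]

local notation "𝔼" => EuclideanSpace ℝ (Fin N)

lemma tsupport_norm_rpow_smul_subset (q : ℝ) (φ : 𝔼 → V) :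
    tsupport (fun y ↦ ‖φ y‖ ^ q • φ y) ⊆ tsupport φ :=
  tsupport_smul_subset_right (fun y ↦ ‖φ y‖ ^ q) φ

/-- The flux `b ∇φ`, written as a sum of two `C¹` fields. -/
lemma flux_eq (κ : ℝ) (φ : 𝔼 → V) (z : 𝔼) (i : Fin N) :
    fderiv ℝ φ z (EuclideanSpace.single i 1) + (κ * z i / ‖z‖ ^ 2) • fderiv ℝ φ z z
      = fderiv ℝ φ z (EuclideanSpace.single i 1)
        + z i • κ • (‖z‖ ^ 2)⁻¹ • fderiv ℝ φ z z := by
  simp only [smul_smul]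
  congr 2
  ring

/-- Weak form of the operator `-div (b ∇φ) - c |y|⁻² φ`, and integrability of the integrand. -/
lemma integral_inner_operator_eq {φ ψ : 𝔼 → V} (hφ : ContDiff ℝ 2 φ)
    (hφc : HasCompactSupport φ) (h0 : 0 ∉ tsupport φ) (hψ : ContDiff ℝ 1 ψ) (κ c : ℝ) :
    Integrable (fun y ↦ inner ℝ (ψ y)
        (-(∑ i, fderiv ℝ (fun z ↦ fderiv ℝ φ z (EuclideanSpace.single i 1)
            + (κ * z i / ‖z‖ ^ 2) • fderiv ℝ φ z z) y (EuclideanSpace.single i 1))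
          - (c / ‖y‖ ^ 2) • φ y)) ∧
    Integrable (fun y ↦ ∑ i, inner ℝ (fderiv ℝ ψ y (EuclideanSpace.single i 1))
            (fderiv ℝ φ y (EuclideanSpace.single i 1))
          + κ * ((‖y‖ ^ 2)⁻¹ * inner ℝ (fderiv ℝ ψ y y) (fderiv ℝ φ y y))
          - c * ((‖y‖ ^ 2)⁻¹ * inner ℝ (ψ y) (φ y))) ∧
    ∫ y, inner ℝ (ψ y)
        (-(∑ i, fderiv ℝ (fun z ↦ fderiv ℝ φ z (EuclideanSpace.single i 1)
            + (κ * z i / ‖z‖ ^ 2) • fderiv ℝ φ z z) y (EuclideanSpace.single i 1))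
          - (c / ‖y‖ ^ 2) • φ y)
      = ∫ y, (∑ i, inner ℝ (fderiv ℝ ψ y (EuclideanSpace.single i 1))
            (fderiv ℝ φ y (EuclideanSpace.single i 1))
          + κ * ((‖y‖ ^ 2)⁻¹ * inner ℝ (fderiv ℝ ψ y y) (fderiv ℝ φ y y))
          - c * ((‖y‖ ^ 2)⁻¹ * inner ℝ (ψ y) (φ y))) := by
  have dφ : ContDiff ℝ 1 (fderiv ℝ φ) := hφ.fderiv_right (by norm_num)
  have cφ := hφ.continuous
  have cψ := hψ.continuous
  have cdφ := dφ.continuous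
  have cdψ := hψ.continuous_fderiv one_ne_zero
  have dR : ContDiff ℝ 1 fun y ↦ fderiv ℝ φ y y := dφ.clm_apply contDiff_id
  have hRt := tsupport_fderiv_apply_self_subset φ
  have hRc : HasCompactSupport fun y ↦ fderiv ℝ φ y y :=
    hφc.of_isClosed_subset (isClosed_tsupport _) hRt
  have hR0 : 0 ∉ tsupport fun y ↦ fderiv ℝ φ y y := fun h ↦ h0 (hRt h)
  have dh : ContDiff ℝ 1 fun y ↦ (‖y‖ ^ 2)⁻¹ • fderiv ℝ φ y y :=
    contDiff_inv_norm_sq_smul dR hR0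
  set F : Fin N → 𝔼 → V := fun i z ↦ fderiv ℝ φ z (EuclideanSpace.single i 1)
    + z i • κ • (‖z‖ ^ 2)⁻¹ • fderiv ℝ φ z z with hF
  have dF : ∀ i, ContDiff ℝ 1 (F i) := fun i ↦
    (dφ.clm_apply contDiff_const).add ((by fun_prop : ContDiff ℝ 1 fun z : 𝔼 ↦ z i).smul
      (contDiff_const.smul dh))
  have hFc : ∀ i, HasCompactSupport (F i) := fun i ↦
    (hφc.fderiv_apply (𝕜 := ℝ) _).add
      ((hRc.smul_left (f := fun z ↦ (‖z‖ ^ 2)⁻¹)).smul_left (f := fun _ ↦ κ)).smul_left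
  have cdF := fun i ↦ (dF i).continuous_fderiv one_ne_zero
  simp only [flux_eq]
  have e1 : ∀ y, inner ℝ (ψ y) (-(∑ i, fderiv ℝ (F i) y (EuclideanSpace.single i 1))
      - (c / ‖y‖ ^ 2) • φ y)
      = -inner ℝ (ψ y) (∑ i, fderiv ℝ (F i) y (EuclideanSpace.single i 1))
        - c * ((‖y‖ ^ 2)⁻¹ * inner ℝ (φ y) (ψ y)) := fun y ↦ by
    rw [inner_sub_right, inner_neg_right, inner_smul_right, real_inner_comm (φ y)]
    ring
  have e2 : ∀ y, ∑ i, inner ℝ (fderiv ℝ ψ y (EuclideanSpace.single i 1)) (F i y)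
      = ∑ i, inner ℝ (fderiv ℝ ψ y (EuclideanSpace.single i 1))
            (fderiv ℝ φ y (EuclideanSpace.single i 1))
          + κ * ((‖y‖ ^ 2)⁻¹ * inner ℝ (fderiv ℝ ψ y y) (fderiv ℝ φ y y)) := fun y ↦ by
    rw [show inner ℝ (fderiv ℝ ψ y y) (fderiv ℝ φ y y) = _ from
      congrArg (inner ℝ · _) (sum_coord_smul_fderiv ψ y y).symm]
    simp only [hF, inner_add_right, Finset.sum_add_distrib, sum_inner, Finset.mul_sum,
      inner_smul_right, inner_smul_left, conj_trivial]
    congr 1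
    exact Finset.sum_congr rfl fun i _ ↦ by ring
  have i0 : Integrable fun y ↦ c * ((‖y‖ ^ 2)⁻¹ * inner ℝ (φ y) (ψ y)) :=
    (integrable_inv_norm_sq_mul_inner cφ cψ hφc h0).const_mul c
  have i1 : Integrable fun y ↦
      inner ℝ (ψ y) (∑ i, fderiv ℝ (F i) y (EuclideanSpace.single i 1)) := by
    simp only [inner_sum]
    exact integrable_finsetSum _ fun i _ ↦ Continuous.integrable_of_hasCompactSupport (by fun_prop)
      (((hFc i).fderiv_apply (𝕜 := ℝ)
        (EuclideanSpace.single i 1)).mono fun x hx h ↦ hx (by simp [h]))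
  have i2 : Integrable fun y ↦
      ∑ i, inner ℝ (fderiv ℝ ψ y (EuclideanSpace.single i 1)) (F i y) :=
    integrable_finsetSum _ fun i _ ↦ Continuous.integrable_of_hasCompactSupport
      (((cdψ.clm_apply continuous_const).inner (dF i).continuous))
      ((hFc i).mono fun x hx h ↦ hx (by simp [h]))
  have e3 : ∀ y, inner ℝ (ψ y) (φ y) = inner ℝ (φ y) (ψ y) := fun y ↦ real_inner_comm _ _
  simp only [← e2, e3]
  refine ⟨(i1.neg.sub i0).congr (.of_forall fun y ↦ (e1 y).symm), i2.sub i0, ?_⟩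
  calc _ = ∫ y, (-inner ℝ (ψ y) (∑ i, fderiv ℝ (F i) y (EuclideanSpace.single i 1))
        - c * ((‖y‖ ^ 2)⁻¹ * inner ℝ (φ y) (ψ y))) := integral_congr_ae (.of_forall e1)
    _ = _ := by
      rw [integral_sub (f := fun y ↦ -inner ℝ (ψ y) _) i1.neg i0, integral_sub i2 i0, integral_neg,
        integral_inner_sum_fderiv_eq_neg hψ dF hFc, neg_neg]

/-- Coercivity of the operator `-div (b ∇φ) - ((N - 2) / 2)² κ |y|⁻² φ` in `Lᵖ`. -/
lemma energy_le {φ : 𝔼 → V} (hφ : ContDiff ℝ 2 φ) (hφc : HasCompactSupport φ)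
    (h0 : 0 ∉ tsupport φ) {κ p : ℝ} (hκ : 0 ≤ κ) (hp : 2 ≤ p) :
    (1 - (1 - 4 * (p - 1) / p ^ 2) * (1 + κ))
        * ∫ y, ∑ i, ‖fderiv ℝ (fun z ↦ ‖φ z‖ ^ (p / 2 - 1) • φ z) y
          (EuclideanSpace.single i 1)‖ ^ 2
      ≤ ∫ y, inner ℝ (‖φ y‖ ^ (p - 2) • φ y)
        (-(∑ i, fderiv ℝ (fun z ↦ fderiv ℝ φ z (EuclideanSpace.single i 1)
            + (κ * z i / ‖z‖ ^ 2) • fderiv ℝ φ z z) y (EuclideanSpace.single i 1))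
          - (((N : ℝ) - 2) ^ 2 / 4 * κ / ‖y‖ ^ 2) • φ y) := by
  have hp0 : 0 < p := by linarith
  set γ := 4 * (p - 1) / p ^ 2 with hγ
  have hγ1 : γ ≤ 1 := by
    rw [hγ, div_le_one (by positivity)]; nlinarith [sq_nonneg (p - 2)]
  have hφ1 : ContDiff ℝ 1 φ := hφ.of_le (by norm_num)
  have hφd := hφ1.differentiable one_ne_zero
  set u : 𝔼 → V := fun z ↦ ‖φ z‖ ^ (p / 2 - 1) • φ z with hu
  set ψ : 𝔼 → V := fun z ↦ ‖φ z‖ ^ (p - 2) • φ z with hψ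
  have du : ContDiff ℝ 1 u := (contDiff_norm_rpow_smul (by linarith)).comp hφ1
  have dψ : ContDiff ℝ 1 ψ := (contDiff_norm_rpow_smul (by linarith)).comp hφ1
  have Du : ∀ y v, fderiv ℝ u y v = normRpowSMulDeriv (p / 2 - 1) (φ y) (fderiv ℝ φ y v) :=
    fun y v ↦ by
      rw [show fderiv ℝ u y = _ from ((hasFDerivAt_norm_rpow_smul (by linarith) (φ y)).comp y
        (hφd y).hasFDerivAt).fderiv]
      rfl
  have Dψ : ∀ y v, fderiv ℝ ψ y v = normRpowSMulDeriv (p - 2) (φ y) (fderiv ℝ φ y v) :=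
    fun y v ↦ by
      rw [show fderiv ℝ ψ y = _ from ((hasFDerivAt_norm_rpow_smul (by linarith) (φ y)).comp y
        (hφd y).hasFDerivAt).fderiv]
      rfl
  have quad : ∀ y v, γ * ‖fderiv ℝ u y v‖ ^ 2 ≤ inner ℝ (fderiv ℝ ψ y v) (fderiv ℝ φ y v) :=
    fun y v ↦ by
      rw [Du, Dψ]
      exact norm_sq_normRpowSMulDeriv_le hp _ _
  have zero_order : ∀ y, inner ℝ (ψ y) (φ y) = ‖u y‖ ^ 2 := fun y ↦ by
    rw [hψ, hu]
    simp only [inner_smul_left, conj_trivial, real_inner_self_eq_norm_sq, norm_smul, mul_pow,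
      Real.norm_eq_abs, sq_abs]
    rw [← Real.rpow_mul_natCast (norm_nonneg _)]
    norm_num
    left; ring_nf
  have hut : tsupport u ⊆ tsupport φ := tsupport_norm_rpow_smul_subset _ φ
  have huc : HasCompactSupport u := hφc.of_isClosed_subset (isClosed_tsupport _) hut
  have hu0 : 0 ∉ tsupport u := fun h ↦ h0 (hut h)
  have cdu := du.continuous_fderiv one_ne_zero
  have hRt := tsupport_fderiv_apply_self_subset u
  have i1 : Integrable fun y ↦ ∑ i, ‖fderiv ℝ u y (EuclideanSpace.single i 1)‖ ^ 2 :=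
    Continuous.integrable_of_hasCompactSupport (by fun_prop)
      ((huc.fderiv (𝕜 := ℝ)).mono fun x hx h ↦ hx (by simp [h]))
  have i2 : Integrable fun y ↦ (‖y‖ ^ 2)⁻¹ * ‖fderiv ℝ u y y‖ ^ 2
      - (((N : ℝ) - 2) / 2) ^ 2 * ((‖y‖ ^ 2)⁻¹ * ‖u y‖ ^ 2) := by
    simp only [← real_inner_self_eq_norm_sq (F := V)]
    have cR : Continuous fun y ↦ fderiv ℝ u y y := by fun_prop
    exact (integrable_inv_norm_sq_mul_inner cR cR
      (huc.of_isClosed_subset (isClosed_tsupport _) hRt) fun h ↦ hu0 (hRt h)).sub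
      ((integrable_inv_norm_sq_mul_inner du.continuous du.continuous huc hu0).const_mul _)
  obtain ⟨-, i3, e⟩ := integral_inner_operator_eq hφ hφc h0 dψ κ (((N : ℝ) - 2) ^ 2 / 4 * κ)
  rw [e, ← integral_const_mul]
  refine (le_add_of_nonneg_right (mul_nonneg hκ (hardy_radial du huc hu0))).trans ?_
  rw [← integral_const_mul κ, ← integral_add (i1.const_mul _) (i2.const_mul _)]
  refine integral_mono ((i1.const_mul _).add (i2.const_mul _)) i3 fun y ↦ ?_
  simp only [zero_order]
  set a := ∑ i, ‖fderiv ℝ u y (EuclideanSpace.single i 1)‖ ^ 2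
  have h1 : γ * a ≤ ∑ i, inner ℝ (fderiv ℝ ψ y (EuclideanSpace.single i 1))
      (fderiv ℝ φ y (EuclideanSpace.single i 1)) := by
    rw [Finset.mul_sum]
    exact Finset.sum_le_sum fun i _ ↦ quad y _
  have h2 : κ * ((‖y‖ ^ 2)⁻¹ * (γ * ‖fderiv ℝ u y y‖ ^ 2))
      ≤ κ * ((‖y‖ ^ 2)⁻¹ * inner ℝ (fderiv ℝ ψ y y) (fderiv ℝ φ y y)) := by
    gcongr
    exact quad y y
  have h3 : (‖y‖ ^ 2)⁻¹ * ‖fderiv ℝ u y y‖ ^ 2 ≤ a := by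
    rcases eq_or_ne y 0 with rfl | hy
    · simp [a]; positivity
    · rw [inv_mul_le_iff₀ (by positivity)]
      exact norm_fderiv_apply_sq_le u y y
  have h4 : (1 - γ) * κ * ((‖y‖ ^ 2)⁻¹ * ‖fderiv ℝ u y y‖ ^ 2) ≤ (1 - γ) * κ * a :=
    mul_le_mul_of_nonneg_left h3 (mul_nonneg (by linarith) hκ)
  linarith

end Energy

lemma norm_norm_rpow_smul {V : Type*} [NormedAddCommGroup V] [NormedSpace ℝ V] {q : ℝ}
    (hq : 0 < q + 1) (z : V) : ‖‖z‖ ^ q • z‖ = ‖z‖ ^ (q + 1) := by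
  rw [norm_smul, Real.norm_of_nonneg (by positivity),
    Real.rpow_add_one' (norm_nonneg z) hq.ne']

lemma coercivity_const_pos {α p : ℝ} (hα : 0 < α) (hp2 : 2 ≤ p) (hp4 : p < 2 + 4 / α) :
    0 < 1 - (1 - 4 * (p - 1) / p ^ 2) * (1 + α * (1 + α / 4)) := by
  have hp0 : 0 < p := by linarith
  have h1 : (p - 2) * α < 4 := (lt_div_iff₀ hα).mp (by linarith)
  have h2 : (p - 2) * (1 + α / 2) < p := by linarith
  have h3 : 0 ≤ (p - 2) * (1 + α / 2) := mul_nonneg (by linarith) (by positivity)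
  have e : 1 - (1 - 4 * (p - 1) / p ^ 2) * (1 + α * (1 + α / 4))
      = (p ^ 2 - ((p - 2) * (1 + α / 2)) ^ 2) / p ^ 2 := by
    field_simp
    ring
  rw [e]
  exact div_pos (sub_pos.mpr (pow_lt_pow_left₀ h2 h3 two_ne_zero)) (by positivity)

lemma weighted_integral_le {N : ℕ} (hN : 3 ≤ N) {p M : ℝ} (hp : 2 ≤ p)
    {φ : EuclideanSpace ℝ (Fin N) → ℂ} (hφ : Continuous φ) (hφc : HasCompactSupport φ)
    {A : Set (EuclideanSpace ℝ (Fin N))} (hA : ∀ y ∉ A, φ y = 0)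
    {m : EuclideanSpace ℝ (Fin N) → ℝ} (hm : ∀ y, φ y ≠ 0 → 0 ≤ m y ∧ m y ≤ M) :
    0 ≤ ∫ y in A, ‖φ y‖ ^ (p * N / ((N : ℝ) - 2)) * m y ∧
    ∫ y in A, ‖φ y‖ ^ (p * N / ((N : ℝ) - 2)) * m y
      ≤ M * ∫ y, ‖‖φ y‖ ^ (p / 2 - 1) • φ y‖ ^ (2 * N / ((N : ℝ) - 2)) := by
  have hN' : (3 : ℝ) ≤ N := by exact_mod_cast hN
  have hN2 : 0 < (N : ℝ) - 2 := by linarith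
  have hq0 : 0 < p * N / ((N : ℝ) - 2) := by positivity
  have hnorm : ∀ y, ‖‖φ y‖ ^ (p / 2 - 1) • φ y‖ ^ (2 * N / ((N : ℝ) - 2))
      = ‖φ y‖ ^ (p * N / ((N : ℝ) - 2)) := fun y ↦ by
    rw [norm_norm_rpow_smul (by linarith), ← Real.rpow_mul (norm_nonneg _)]
    congr 1
    field_simp
    ring
  simp only [hnorm]
  have nonneg : ∀ y, 0 ≤ ‖φ y‖ ^ (p * N / ((N : ℝ) - 2)) * m y := fun y ↦ by
    by_cases hy : φ y = 0
    · simp [hy, hq0.ne']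
    · exact mul_nonneg (by positivity) (hm y hy).1
  rw [setIntegral_eq_integral_of_forall_compl_eq_zero fun y hy ↦ by simp [hA y hy, hq0.ne'],
    ← integral_const_mul]
  refine ⟨integral_nonneg nonneg, integral_mono_of_nonneg (.of_forall nonneg) ?_
    (.of_forall fun y ↦ ?_)⟩
  · exact (Continuous.integrable_of_hasCompactSupport
      (hφ.norm.rpow_const fun _ ↦ .inr hq0.le)
      (hφc.mono fun x hx h ↦ hx (by simp [h, hq0.ne']))).const_mul _
  · by_cases hy : φ y = 0
    · simp [hy, hq0.ne']
    · simp only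
      rw [mul_comm]
      exact mul_le_mul_of_nonneg_right (hm y hy).2 (by positivity)

lemma re_integral_operator_eq {N : ℕ} {p : ℝ} {φ : EuclideanSpace ℝ (Fin N) → ℂ}
    (hφ : ContDiff ℝ 2 φ) (hφc : HasCompactSupport φ) (h0 : 0 ∉ tsupport φ) (hp : 2 ≤ p)
    {A : Set (EuclideanSpace ℝ (Fin N))} (hA : ∀ y ∉ A, φ y = 0) (α : ℝ) :
    (∫ y in A,
      ((-(∑ i : Fin N,
          fderiv ℝ (fun z =>
              fderiv ℝ φ z (EuclideanSpace.single i 1)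
                + ((α * (1 + α / 4) * z i / ‖z‖ ^ 2 : ℝ) : ℂ)
                  * (∑ j : Fin N,
                      ((z j : ℝ) : ℂ)
                        * fderiv ℝ φ z (EuclideanSpace.single j 1)))
            y (EuclideanSpace.single i 1)))
        - ((((N : ℝ) - 2) ^ 2 * α * (4 + α) / 16 / ‖y‖ ^ 2 : ℝ) : ℂ) * φ y)
        * (starRingEnd ℂ) (φ y) * ((‖φ y‖ ^ (p - 2) : ℝ) : ℂ)).re
      = ∫ y, inner ℝ (‖φ y‖ ^ (p - 2) • φ y)
        (-(∑ i, fderiv ℝ (fun z ↦ fderiv ℝ φ z (EuclideanSpace.single i 1)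
            + (α * (1 + α / 4) * z i / ‖z‖ ^ 2) • fderiv ℝ φ z z) y (EuclideanSpace.single i 1))
          - (((N : ℝ) - 2) ^ 2 / 4 * (α * (1 + α / 4)) / ‖y‖ ^ 2) • φ y) := by
  have hrad : ∀ z : EuclideanSpace ℝ (Fin N),
      ∑ j, ((z j : ℝ) : ℂ) * fderiv ℝ φ z (EuclideanSpace.single j 1) = fderiv ℝ φ z z :=
    fun z ↦ by simpa [Complex.real_smul] using sum_coord_smul_fderiv φ z z
  have dψ : ContDiff ℝ 1 fun y ↦ ‖φ y‖ ^ (p - 2) • φ y :=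
    (contDiff_norm_rpow_smul (by linarith)).comp (hφ.of_le (by norm_num))
  have iL := fun (ψ : EuclideanSpace ℝ (Fin N) → ℂ) (hψ : ContDiff ℝ 1 ψ) ↦
    (integral_inner_operator_eq hφ hφc h0 hψ (α * (1 + α / 4))
      (((N : ℝ) - 2) ^ 2 / 4 * (α * (1 + α / 4)))).1
  simp only [hrad]
  simp only [← Complex.real_smul]
  rw [show ((N : ℝ) - 2) ^ 2 * α * (4 + α) / 16
    = ((N : ℝ) - 2) ^ 2 / 4 * (α * (1 + α / 4)) by ring]
  generalize hL : (fun y ↦ -(∑ i, fderiv ℝ (fun z ↦ fderiv ℝ φ z (EuclideanSpace.single i 1)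
      + (α * (1 + α / 4) * z i / ‖z‖ ^ 2) • fderiv ℝ φ z z) y (EuclideanSpace.single i 1))
    - (((N : ℝ) - 2) ^ 2 / 4 * (α * (1 + α / 4)) / ‖y‖ ^ 2) • φ y) = L at iL
  have hLy := fun y ↦ congrFun hL y
  simp only [hLy] at iL ⊢
  have hint : ∀ y, L y * (starRingEnd ℂ) (φ y) * ((‖φ y‖ ^ (p - 2) : ℝ) : ℂ)
      = L y * (starRingEnd ℂ) (‖φ y‖ ^ (p - 2) • φ y) := fun y ↦ by
    simp only [Complex.real_smul, map_mul, Complex.conj_ofReal]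
    ring
  simp only [hint]
  have ic : Integrable fun y ↦ L y * (starRingEnd ℂ) (‖φ y‖ ^ (p - 2) • φ y) := by
    refine Integrable.re_im_iff.mp ⟨?_, ?_⟩
    · exact iL _ dψ
    · refine (iL (fun y ↦ Complex.I * ‖φ y‖ ^ (p - 2) • φ y)
        (contDiff_const.mul dψ)).congr (.of_forall fun y ↦ ?_)
      simp [Complex.inner]
      ring
  rw [setIntegral_eq_integral_of_forall_compl_eq_zero fun y hy ↦ by simp [hA y hy]]
  exact (integral_re ic).symm

/-- Sobolev-type inequality. For `N ≥ 3`, `2 ≤ p < 2 + 4/α`, there is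
`C > 0` depending only on `N, p, α, a₁, a₂` such that for all admissible `Ω, a` and all
smooth compactly supported complex `φ` on `Ω_Ψ`,
`(∫_{Ω_Ψ} |φ|^{pN/(N−2)} m̃ dy)^{(N−2)/(pN)}
  ≤ C (Re ∫_{Ω_Ψ} (−div(b∇φ) − ((N−2)²α(4+α)/16)|y|⁻²φ) conj(φ) |φ|^{p−2} dy)^{1/p}`. -/
theorem stmt_10 (N : ℕ) (hN : 3 ≤ N) (α : ℝ) (hα : 0 < α)
    (p : ℝ) (hp2 : 2 ≤ p) (hp4 : p < 2 + 4 / α)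
    (a₁ a₂ : ℝ) (ha₁ : 0 < a₁) (ha₁₂ : a₁ ≤ a₂) :
    ∃ C > (0 : ℝ),
      ∀ (Ω : Set (EuclideanSpace ℝ (Fin N))), IsOpen Ω →
        (0 : EuclideanSpace ℝ (Fin N)) ∉ closure Ω →
      ∀ (a : EuclideanSpace ℝ (Fin N) → ℝ), ContinuousOn a (closure Ω) →
        (∀ x ∈ closure Ω, a₁ * ‖x‖ ^ α ≤ a x ∧ a x ≤ a₂ * ‖x‖ ^ α) →
      ∀ (Ψinv : EuclideanSpace ℝ (Fin N) → EuclideanSpace ℝ (Fin N)),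
        (∀ y, Ψinv y = ‖y‖ ^ (-α / (2 + α)) • y) →
      ∀ (ΩΨ : Set (EuclideanSpace ℝ (Fin N))), ΩΨ = {y | Ψinv y ∈ Ω} →
      ∀ (m : EuclideanSpace ℝ (Fin N) → ℝ),
        (∀ y, m y = ‖Ψinv y‖ ^ (-α) * a (Ψinv y)) →
      ∀ (φ : EuclideanSpace ℝ (Fin N) → ℂ),
        ContDiff ℝ (⊤ : ℕ∞) φ → HasCompactSupport φ → tsupport φ ⊆ ΩΨ →
        (∫ y in ΩΨ, ‖φ y‖ ^ (p * N / ((N : ℝ) - 2)) * m y) ^ (((N : ℝ) - 2) / (p * N))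
          ≤ C * ((∫ y in ΩΨ,
              ((-(∑ i : Fin N,
                  fderiv ℝ (fun z =>
                      fderiv ℝ φ z (EuclideanSpace.single i 1)
                        + ((α * (1 + α / 4) * z i / ‖z‖ ^ 2 : ℝ) : ℂ)
                          * (∑ j : Fin N,
                              ((z j : ℝ) : ℂ)
                                * fderiv ℝ φ z (EuclideanSpace.single j 1)))
                    y (EuclideanSpace.single i 1)))
                - ((((N : ℝ) - 2) ^ 2 * α * (4 + α) / 16 / ‖y‖ ^ 2 : ℝ) : ℂ) * φ y)
                * (starRingEnd ℂ) (φ y) * ((‖φ y‖ ^ (p - 2) : ℝ) : ℂ)).re) ^ (1 / p) := by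
  have hN' : (3 : ℝ) ≤ N := by exact_mod_cast hN
  have hN2 : 0 < (N : ℝ) - 2 := by linarith
  have hp0 : 0 < p := by linarith
  have hκ0 : 0 ≤ α * (1 + α / 4) := by positivity
  obtain ⟨ε, hε⟩ : ∃ ε, ε = 1 - (1 - 4 * (p - 1) / p ^ 2) * (1 + α * (1 + α / 4)) := ⟨_, rfl⟩
  have hε0 : 0 < ε := hε ▸ coercivity_const_pos hα hp2 hp4
  obtain ⟨S, hS, sob⟩ := exists_sobolev_const (N := N) (V := ℂ) hN
  set r : ℝ := ((N : ℝ) - 2) / (p * N) with hr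
  have hr0 : 0 < r := by positivity
  have ha₂ : 0 < a₂ := ha₁.trans_le ha₁₂
  refine ⟨(a₂ * S) ^ r * (ε⁻¹) ^ (1 / p), by positivity, ?_⟩
  intro Ω hΩ hΩ0 a ha haΩ Ψinv hΨ ΩΨ hΩΨ m hm φ hφ hφc hφs
  have h0 : 0 ∉ tsupport φ := fun h ↦ by
    have := hφs h
    rw [hΩΨ, Set.mem_ofPred_eq, hΨ, smul_zero] at this
    exact hΩ0 (subset_closure this)
  have hφ2 : ContDiff ℝ 2 φ := contDiff_infty.mp hφ 2
  have hφΩ : ∀ y ∉ ΩΨ, φ y = 0 := fun y hy ↦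
    image_eq_zero_of_notMem_tsupport fun h ↦ hy (hφs h)
  have du : ContDiff ℝ 1 fun y ↦ ‖φ y‖ ^ (p / 2 - 1) • φ y :=
    (contDiff_norm_rpow_smul (by linarith)).comp (hφ2.of_le (by norm_num))
  have huc : HasCompactSupport fun y ↦ ‖φ y‖ ^ (p / 2 - 1) • φ y :=
    hφc.mono fun x hx h ↦ hx (by simp [h])
  have hmb : ∀ y, φ y ≠ 0 → 0 ≤ m y ∧ m y ≤ a₂ := fun y hy ↦ by
    have hy' : y ∈ ΩΨ := by by_contra h; exact hy (hφΩ y h)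
    rw [hΩΨ, Set.mem_ofPred_eq] at hy'
    have hx := subset_closure hy'
    have hxn : 0 < ‖Ψinv y‖ := norm_pos_iff.mpr fun h ↦ hΩ0 (h ▸ hx)
    obtain ⟨h1, h2⟩ := haΩ _ hx
    rw [hm]
    refine ⟨mul_nonneg (by positivity) (le_trans (by positivity) h1), ?_⟩
    calc ‖Ψinv y‖ ^ (-α) * a (Ψinv y) ≤ ‖Ψinv y‖ ^ (-α) * (a₂ * ‖Ψinv y‖ ^ α) := by gcongr
      _ = a₂ := by
        rw [Real.rpow_neg hxn.le]
        field_simp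
  obtain ⟨hlhs0, lhs⟩ := weighted_integral_le hN hp2 hφ2.continuous hφc hφΩ hmb
  replace lhs := lhs.trans (mul_le_mul_of_nonneg_left (sob _ du huc) ha₂.le)
  have rhs := energy_le hφ2 hφc h0 hκ0 hp2
  have hT0 : 0 ≤ ∫ y, ∑ i, ‖fderiv ℝ (fun z ↦ ‖φ z‖ ^ (p / 2 - 1) • φ z) y
      (EuclideanSpace.single i 1)‖ ^ 2 := integral_nonneg fun y ↦ by positivity
  rw [re_integral_operator_eq hφ2 hφc h0 hp2 hφΩ α]
  generalize (∫ y, ∑ i, ‖fderiv ℝ (fun z ↦ ‖φ z‖ ^ (p / 2 - 1) • φ z) y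
      (EuclideanSpace.single i 1)‖ ^ 2) = T at lhs rhs hT0
  rw [← hε] at rhs
  generalize (∫ y, inner ℝ (‖φ y‖ ^ (p - 2) • φ y) _) = J at rhs ⊢
  have hTJ : T ≤ ε⁻¹ * J := by
    rw [le_inv_mul_iff₀ hε0]
    exact rhs
  have hJ0 : 0 ≤ J := (mul_nonneg hε0.le hT0).trans rhs
  calc _ ≤ (a₂ * (S * T ^ ((N : ℝ) / ((N : ℝ) - 2)))) ^ r := Real.rpow_le_rpow hlhs0 lhs hr0.le
    _ = (a₂ * S) ^ r * T ^ (1 / p) := by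
      rw [← mul_assoc, Real.mul_rpow (by positivity) (by positivity), ← Real.rpow_mul hT0]
      congr 2
      rw [hr]
      field_simp
    _ ≤ (a₂ * S) ^ r * (ε⁻¹ * J) ^ (1 / p) := by gcongr
    _ = _ := by rw [Real.mul_rpow (by positivity) hJ0, mul_assoc]
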